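/- Every topological sort of the predecessor graph G(Π) corresponds to a maximal chain of stable matchings: if ρ_0, ρ_1, …, ρ_{k-1} is an enumeration of all rotations in Π such that whenever ρ_i is a (type 1 or type 2) predecessor of ρ_j we have i < j, then, setting μ_0 to be the man-optimal stable matching and μ_{i+1} to be the elimination of ρ_i from μ_i, each ρ_i is a rotation exposed in μ_i (so each μ_{i+1} is stable and covers μ_i), and μ_k is the woman-optimal stable matching. -/

import Mathlib

/-- A matching market: men `M` and women `W`; each man has a strict preference
order over `W ∪ {∅}` and each woman over `M ∪ {∅}`, encoded by injective rank
functions (a strictly higher rank means strictly more preferred); `none`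
plays the role of `∅` (being unmatched), and partners ranked below `none`
are unacceptable. -/
structure Market (M W : Type*) where
  mRank : M → Option W → ℕ
  wRank : W → Option M → ℕ
  mRank_inj : ∀ m, Function.Injective (mRank m)
  wRank_inj : ∀ w, Function.Injective (wRank w)

/-- A matching: `mu` assigns each man a woman or `none`, `nu` assigns each
woman a man or `none`, and `μ(m) = w ↔ μ(w) = m`. -/
structure Matching (M W : Type*) where
  mu : M → Option W
  nu : W → Option M
  consistent : ∀ m w, mu m = some w ↔ nu w = some m

variable {M W : Type*}

/-- Every matched agent prefers their partner to `∅`. -/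
def Market.IndivRational (mkt : Market M W) (μ : Matching M W) : Prop :=
  (∀ m w, μ.mu m = some w → mkt.mRank m none < mkt.mRank m (some w)) ∧
  (∀ w m, μ.nu w = some m → mkt.wRank w none < mkt.wRank w (some m))

/-- `(m, w)` is a blocking pair for `μ`: they are not matched to each other,
`w ≻_m μ(m)` and `m ≻_w μ(w)`. -/
def Market.Blocking (mkt : Market M W) (μ : Matching M W) (m : M) (w : W) : Prop :=
  μ.mu m ≠ some w ∧
  mkt.mRank m (μ.mu m) < mkt.mRank m (some w) ∧
  mkt.wRank w (μ.nu w) < mkt.wRank w (some m)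

/-- A matching is stable if it is individually rational and has no blocking pair. -/
def Market.Stable (mkt : Market M W) (μ : Matching M W) : Prop :=
  mkt.IndivRational μ ∧ ∀ m w, ¬ mkt.Blocking μ m w

/-- Woman-dominance: `μ ≥ μ'` iff every woman weakly prefers her partner in `μ`. -/
def Market.Dom (mkt : Market M W) (μ μ' : Matching M W) : Prop :=
  ∀ w, mkt.wRank w (μ'.nu w) ≤ mkt.wRank w (μ.nu w)

/-- Strict woman-dominance: `μ > μ'`. -/
def Market.StrictDom (mkt : Market M W) (μ μ' : Matching M W) : Prop :=
  mkt.Dom μ μ' ∧ μ ≠ μ'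

/-- `μ'` covers `μ` in the woman-dominance order on stable matchings. -/
def Market.Covers (mkt : Market M W) (μ' μ : Matching M W) : Prop :=
  mkt.StrictDom μ' μ ∧
  ¬ ∃ μ'' : Matching M W, mkt.Stable μ'' ∧ mkt.StrictDom μ' μ'' ∧ mkt.StrictDom μ'' μ

/-- `μ'` is the elimination of the list `ρ = [(w_0,m_0),…,(w_{k-1},m_{k-1})]`
from `μ`: `k ≥ 2`, the women (resp. men) in `ρ` are distinct, `μ(w_i) = m_i`,
`μ'(m_i) = w_{(i+1) mod k}`, and every agent not appearing in `ρ` has the same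
partner in `μ` and `μ'`. -/
def Matching.IsElimOf (μ' μ : Matching M W) (ρ : List (W × M)) : Prop :=
  2 ≤ ρ.length ∧
  (ρ.map Prod.fst).Nodup ∧ (ρ.map Prod.snd).Nodup ∧
  (∀ i : Fin ρ.length, μ.nu (ρ.get i).1 = some (ρ.get i).2) ∧
  (∀ i : Fin ρ.length, μ'.mu (ρ.get i).2 =
    some (ρ.get ⟨(i.1 + 1) % ρ.length,
      Nat.mod_lt _ (Nat.lt_of_le_of_lt (Nat.zero_le _) i.isLt)⟩).1) ∧
  (∀ m : M, m ∉ ρ.map Prod.snd → μ'.mu m = μ.mu m) ∧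
  (∀ w : W, w ∉ ρ.map Prod.fst → μ'.nu w = μ.nu w)

/-- `ρ` is a rotation exposed in `μ`: the elimination of `ρ` from `μ` is a
stable matching which covers `μ`. -/
def Market.ExposedRotation (mkt : Market M W) (μ : Matching M W) (ρ : List (W × M)) : Prop :=
  ∃ μ' : Matching M W, Matching.IsElimOf μ' μ ρ ∧ mkt.Stable μ' ∧ mkt.Covers μ' μ

/-- `ρ` belongs to the set `Π` of all rotations, i.e. it is exposed in some
stable matching. -/
def Market.InPi (mkt : Market M W) (ρ : List (W × M)) : Prop :=
  ∃ μ : Matching M W, mkt.Stable μ ∧ mkt.ExposedRotation μ ρ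

/-- The cyclically next index in a rotation. -/
def RotNext (ρ : List (W × M)) (i : Fin ρ.length) : Fin ρ.length :=
  ⟨(i.1 + 1) % ρ.length, Nat.mod_lt _ (Nat.lt_of_le_of_lt (Nat.zero_le _) i.isLt)⟩

/-- The cyclically previous index in a rotation. -/
def RotPrev (ρ : List (W × M)) (i : Fin ρ.length) : Fin ρ.length :=
  ⟨(i.1 + ρ.length - 1) % ρ.length, Nat.mod_lt _ (Nat.lt_of_le_of_lt (Nat.zero_le _) i.isLt)⟩

/-- `ρ` moves man `m` from `w` to `w'` (i.e. `m = m_i`, `w = w_i`, `w' = w_{i+1}`). -/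
def MovesManFromTo (ρ : List (W × M)) (m : M) (w w' : W) : Prop :=
  ∃ i : Fin ρ.length, (ρ.get i).2 = m ∧ (ρ.get i).1 = w ∧ (ρ.get (RotNext ρ i)).1 = w'

/-- `ρ` moves woman `w` from `m` to `m'` (i.e. `w = w_i`, `m = m_i`, `m' = m_{i-1}`). -/
def MovesWomanFromTo (ρ : List (W × M)) (w : W) (m m' : M) : Prop :=
  ∃ i : Fin ρ.length, (ρ.get i).1 = w ∧ (ρ.get i).2 = m ∧ (ρ.get (RotPrev ρ i)).2 = m'

/-- `ρ1` is a type 1 predecessor of `ρ2`: `ρ1` moves some man `m` to a woman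
`w` and the pair `(w, m)` appears in `ρ2`. -/
def Market.Type1Pred (_mkt : Market M W) (ρ1 ρ2 : List (W × M)) : Prop :=
  ∃ (w : W) (m : M), (∃ w0 : W, MovesManFromTo ρ1 m w0 w) ∧ (w, m) ∈ ρ2

/-- `ρ1` is a type 2 predecessor of `ρ2`: `ρ1` moves some woman `w` from a man
strictly below `m` to a man strictly above `m`, and `ρ2` moves `m` from a woman
strictly above `w` to a woman strictly below `w`. -/
def Market.Type2Pred (mkt : Market M W) (ρ1 ρ2 : List (W × M)) : Prop :=
  ∃ (m : M) (w : W) (mlo mhi : M) (whi wlo : W),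
    MovesWomanFromTo ρ1 w mlo mhi ∧
    mkt.wRank w (some mlo) < mkt.wRank w (some m) ∧
    mkt.wRank w (some m) < mkt.wRank w (some mhi) ∧
    MovesManFromTo ρ2 m whi wlo ∧
    mkt.mRank m (some wlo) < mkt.mRank m (some w) ∧
    mkt.mRank m (some w) < mkt.mRank m (some whi)

/-- `ρ1` is a (type 1 or type 2) predecessor of `ρ2`; these are the edges of
the predecessor graph `G(Π)`. -/
def Market.Pred (mkt : Market M W) (ρ1 ρ2 : List (W × M)) : Prop :=
  mkt.Type1Pred ρ1 ρ2 ∨ mkt.Type2Pred ρ1 ρ2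

/-- `σ` assigns each woman the more preferred of her partners in `μ` and `μ'`. -/
def Market.IsJoin (mkt : Market M W) (μ μ' σ : Matching M W) : Prop :=
  ∀ w, σ.nu w = if mkt.wRank w (μ'.nu w) ≤ mkt.wRank w (μ.nu w) then μ.nu w else μ'.nu w

/-- `σ` assigns each woman the less preferred of her partners in `μ` and `μ'`. -/
def Market.IsMeet (mkt : Market M W) (μ μ' σ : Matching M W) : Prop :=
  ∀ w, σ.nu w = if mkt.wRank w (μ.nu w) ≤ mkt.wRank w (μ'.nu w) then μ.nu w else μ'.nu w

/-!
The stable matchings form a distributive lattice under woman-dominance, and every edge of its Hasse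
diagram is the elimination of a rotation. By distributivity, an edge `a ⋖ b` labelled `ρ` reappears
with the same label at `x ⋖ x ⊔ b` for every `x ≥ a` with `b ≰ x`.

Let an edge `y ⋖ x` labelled `τ` be followed by an edge `x ⋖ x'` labelled `ρ`. If `τ` is not a
type 1 predecessor of `ρ`, then the pairs of `ρ` are already matched in `y`, so `ρ` can be
eliminated from `y`. If `τ` is not a type 2 predecessor of `ρ` either, the result has no blocking
pair, and `y` has an outgoing edge labelled `ρ`. Hence a minimal stable matching above `c` in which
`ρ` is exposed is either `c` itself or the end of an edge, above `c`, labelled with a predecessor of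
`ρ`. The latter is impossible once all predecessors of `ρ` are eliminated in `c`, because no label
occurs twice on a chain.
-/

/-! ### The lattice of stable matchings -/

namespace Market

section Stability

variable {mkt : Market M W} {μ ν σ : Matching M W} {m : M} {w : W}

theorem Stable.none_le_mu (hμ : mkt.Stable μ) (m : M) :
    mkt.mRank m none ≤ mkt.mRank m (μ.mu m) := by
  cases h : μ.mu m with
  | none => exact le_rfl
  | some w => exact (hμ.1.1 m w h).le

theorem Stable.none_le_nu (hμ : mkt.Stable μ) (w : W) :
    mkt.wRank w none ≤ mkt.wRank w (μ.nu w) := by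
  cases h : μ.nu w with
  | none => exact le_rfl
  | some m => exact (hμ.1.2 w m h).le

theorem Stable.exists_mu_eq_some_of_lt (hμ : mkt.Stable μ)
    (h : mkt.mRank m (μ.mu m) < mkt.mRank m (ν.mu m)) : ∃ w, ν.mu m = some w :=
  Option.ne_none_iff_exists'.1 fun h0 => (hμ.none_le_mu m).not_gt (h0 ▸ h)

theorem Stable.exists_nu_eq_some_of_lt (hμ : mkt.Stable μ)
    (h : mkt.wRank w (μ.nu w) < mkt.wRank w (ν.nu w)) : ∃ m, ν.nu w = some m :=
  Option.ne_none_iff_exists'.1 fun h0 => (hμ.none_le_nu w).not_gt (h0 ▸ h)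

theorem Stable.some_lt_nu (hμ : mkt.Stable μ)
    (h : mkt.mRank m (μ.mu m) < mkt.mRank m (some w)) :
    mkt.wRank w (some m) < mkt.wRank w (μ.nu w) := by
  have hne : μ.mu m ≠ some w := fun he => h.ne (congrArg _ he)
  exact lt_of_le_of_ne (not_lt.1 fun hlt => hμ.2 m w ⟨hne, h, hlt⟩)
    fun he => hne ((μ.consistent m w).2 (mkt.wRank_inj w he).symm)

theorem Stable.some_lt_mu (hμ : mkt.Stable μ)
    (h : mkt.wRank w (μ.nu w) < mkt.wRank w (some m)) :
    mkt.mRank m (some w) < mkt.mRank m (μ.mu m) := by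
  have hne : μ.mu m ≠ some w := fun he => h.ne (congrArg _ ((μ.consistent m w).1 he))
  exact lt_of_le_of_ne (not_lt.1 fun hlt => hμ.2 m w ⟨hne, hlt, h⟩)
    fun he => hne (mkt.mRank_inj m he).symm

theorem Stable.mu_lt_of_nu_lt (hμ : mkt.Stable μ) (h : ν.nu w = some m)
    (hlt : mkt.wRank w (μ.nu w) < mkt.wRank w (ν.nu w)) :
    mkt.mRank m (ν.mu m) < mkt.mRank m (μ.mu m) := by
  rw [(ν.consistent m w).2 h]
  exact hμ.some_lt_mu (h ▸ hlt)

theorem Stable.nu_lt_of_mu_lt (hμ : mkt.Stable μ) (h : ν.mu m = some w)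
    (hlt : mkt.mRank m (μ.mu m) < mkt.mRank m (ν.mu m)) :
    mkt.wRank w (ν.nu w) < mkt.wRank w (μ.nu w) := by
  rw [(ν.consistent m w).1 h]
  exact hμ.some_lt_nu (h ▸ hlt)

theorem Stable.mu_le_of_dom (hμ : mkt.Stable μ) (h : mkt.Dom ν μ) (m : M) :
    mkt.mRank m (ν.mu m) ≤ mkt.mRank m (μ.mu m) := by
  by_contra! hlt
  obtain ⟨w, hw⟩ := hμ.exists_mu_eq_some_of_lt hlt
  exact (h w).not_gt (hμ.nu_lt_of_mu_lt hw hlt)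

theorem stable_of_none_le
    (hm : ∀ m w, μ.mu m = some w → mkt.mRank m none ≤ mkt.mRank m (some w))
    (hw : ∀ w m, μ.nu w = some m → mkt.wRank w none ≤ mkt.wRank w (some m))
    (h : ∀ m w, mkt.mRank m (μ.mu m) < mkt.mRank m (some w) →
      mkt.wRank w (some m) ≤ mkt.wRank w (μ.nu w)) : mkt.Stable μ := by
  refine ⟨⟨fun m w hmw => ?_, fun w m hwm => ?_⟩, fun m w ⟨_, hm, hw⟩ => (h m w hm).not_gt hw⟩
  · exact lt_of_le_of_ne (hm m w hmw) fun he => nomatch mkt.mRank_inj m he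
  · exact lt_of_le_of_ne (hw w m hwm) fun he => nomatch mkt.wRank_inj w he

theorem Stable.of_forall_or (hμ : mkt.Stable μ) (hν : mkt.Stable ν)
    (h : ∀ m w,
      (mkt.mRank m (μ.mu m) ≤ mkt.mRank m (σ.mu m) ∧
        mkt.wRank w (μ.nu w) ≤ mkt.wRank w (σ.nu w)) ∨
      (mkt.mRank m (ν.mu m) ≤ mkt.mRank m (σ.mu m) ∧
        mkt.wRank w (ν.nu w) ≤ mkt.wRank w (σ.nu w))) :
    mkt.Stable σ := by
  have none_le (m : M) (w : W) :
      mkt.mRank m none ≤ mkt.mRank m (σ.mu m) ∧ mkt.wRank w none ≤ mkt.wRank w (σ.nu w) :=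
    (h m w).elim
      (fun h => ⟨(hμ.none_le_mu m).trans h.1, (hμ.none_le_nu w).trans h.2⟩)
      fun h => ⟨(hν.none_le_mu m).trans h.1, (hν.none_le_nu w).trans h.2⟩
  refine stable_of_none_le (fun m w hmw => hmw ▸ (none_le m w).1)
    (fun w m hwm => hwm ▸ (none_le m w).2) fun m w hm => ?_
  rcases h m w with ⟨hm', hw'⟩ | ⟨hm', hw'⟩
  · exact (hμ.some_lt_nu (hm'.trans_lt hm)).le.trans hw'
  · exact (hν.some_lt_nu (hm'.trans_lt hm)).le.trans hw'

end Stability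

end Market

namespace Matching

@[ext]
theorem ext_nu {μ ν : Matching M W} (h : ∀ w, μ.nu w = ν.nu w) : μ = ν := by
  obtain ⟨mu, nu, hμ⟩ := μ
  obtain ⟨mu', nu', hν⟩ := ν
  obtain rfl : nu = nu' := funext h
  obtain rfl : mu = mu' := funext fun m => Option.ext fun w => (hμ m w).trans (hν m w).symm
  rfl

/-- The matching that agrees with `μ` on the men in `T` and the women in `S`, and with `ν` on all
other agents. The two hypotheses say that no pair of `μ` or `ν` is separated. -/
def glue (μ ν : Matching M W) (T : M → Prop) (S : W → Prop) [DecidablePred T] [DecidablePred S]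
    (hμ : ∀ ⦃m w⦄, μ.mu m = some w → (T m ↔ S w)) (hν : ∀ ⦃m w⦄, ν.mu m = some w → (T m ↔ S w)) :
    Matching M W where
  mu m := if T m then μ.mu m else ν.mu m
  nu w := if S w then μ.nu w else ν.nu w
  consistent m w := by
    have hμ' := fun h => hμ ((μ.consistent m w).2 h)
    have hν' := fun h => hν ((ν.consistent m w).2 h)
    split_ifs with hT hS hS
    · exact μ.consistent m w
    · exact iff_of_false (fun h => hS ((hμ h).1 hT)) fun h => hS ((hν' h).1 hT)
    · exact iff_of_false (fun h => hT ((hν h).2 hS)) fun h => hT ((hμ' h).2 hS)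
    · exact ν.consistent m w

end Matching

namespace Market

section Lattice

variable {mkt : Market M W}

section Decomposition

variable [Finite W] {μ ν : Matching M W} {m : M} {w : W}

-- Each woman who is better off in `μ` is sent to the `ν`-partner of her `μ`-partner; this is an
-- injective, hence surjective, self-map of the women who are better off in `μ`.
theorem Stable.exists_nu_eq_some_and_nu_eq_some (hμ : mkt.Stable μ) (hν : mkt.Stable ν)
    (h : mkt.wRank w (ν.nu w) < mkt.wRank w (μ.nu w)) :
    ∃ m w', ν.nu w = some m ∧ μ.nu w' = some m ∧
      mkt.wRank w' (ν.nu w') < mkt.wRank w' (μ.nu w') := by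
  have exists_next (w : {w // mkt.wRank w (ν.nu w) < mkt.wRank w (μ.nu w)}) :
      ∃ (w' : {w // mkt.wRank w (ν.nu w) < mkt.wRank w (μ.nu w)}) (m : M),
        ν.nu w' = some m ∧ μ.nu w = some m := by
    obtain ⟨m, hm⟩ := hν.exists_nu_eq_some_of_lt w.2
    have hlt := hν.mu_lt_of_nu_lt hm w.2
    obtain ⟨w', hw'⟩ := hμ.exists_mu_eq_some_of_lt hlt
    exact ⟨⟨w', hμ.nu_lt_of_mu_lt hw' hlt⟩, m, (ν.consistent m w').1 hw', hm⟩
  choose next m hν_next hμ_m using exists_next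
  have next_injective : Function.Injective next := fun w₁ w₂ h => by
    have hm : m w₁ = m w₂ := Option.some_injective _ (by rw [← hν_next, ← hν_next, h])
    have h₁ := (μ.consistent _ _).2 (hμ_m w₁)
    rw [hm, (μ.consistent _ _).2 (hμ_m w₂)] at h₁
    exact Subtype.ext (Option.some_injective _ h₁.symm)
  obtain ⟨w', hw'⟩ := Finite.surjective_of_injective next_injective ⟨w, h⟩
  exact ⟨m w', w', by rw [← hν_next, hw'], hμ_m w', w'.2⟩

theorem Stable.nu_lt_iff_mu_lt (hμ : mkt.Stable μ) (hν : mkt.Stable ν) (h : ν.mu m = some w) :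
    mkt.wRank w (ν.nu w) < mkt.wRank w (μ.nu w) ↔ mkt.mRank m (μ.mu m) < mkt.mRank m (ν.mu m) := by
  refine ⟨fun hw => ?_, hμ.nu_lt_of_mu_lt h⟩
  obtain ⟨m', w', hm', hw', hlt⟩ := hμ.exists_nu_eq_some_and_nu_eq_some hν hw
  obtain rfl : m' = m := Option.some_injective _ (hm'.symm.trans ((ν.consistent m w).1 h))
  exact hν.mu_lt_of_nu_lt hw' hlt

theorem Stable.mu_lt_iff_nu_lt (hμ : mkt.Stable μ) (hν : mkt.Stable ν) (h : ν.mu m = some w) :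
    mkt.mRank m (ν.mu m) < mkt.mRank m (μ.mu m) ↔ mkt.wRank w (μ.nu w) < mkt.wRank w (ν.nu w) := by
  refine ⟨fun hm => ?_, hμ.mu_lt_of_nu_lt ((ν.consistent m w).1 h)⟩
  obtain ⟨w₁, hw₁⟩ := hν.exists_mu_eq_some_of_lt hm
  obtain ⟨m', w', hm', hw', hlt⟩ :=
    hν.exists_nu_eq_some_and_nu_eq_some hμ (hν.nu_lt_of_mu_lt hw₁ hm)
  obtain rfl : m' = m := Option.some_injective _ (hm'.symm.trans ((μ.consistent m w₁).1 hw₁))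
  obtain rfl : w' = w := Option.some_injective _ (((ν.consistent m' w').2 hw').symm.trans h)
  exact hlt

theorem Stable.mu_le_iff_nu_le (hμ : mkt.Stable μ) (hν : mkt.Stable ν) (h : ν.mu m = some w) :
    mkt.mRank m (ν.mu m) ≤ mkt.mRank m (μ.mu m) ↔ mkt.wRank w (μ.nu w) ≤ mkt.wRank w (ν.nu w) :=
  not_iff_not.1 (by simpa only [not_le] using (hμ.nu_lt_iff_mu_lt hν h).symm)

theorem Stable.nu_le_iff_mu_le (hμ : mkt.Stable μ) (hν : mkt.Stable ν) (h : ν.mu m = some w) :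
    mkt.wRank w (ν.nu w) ≤ mkt.wRank w (μ.nu w) ↔ mkt.mRank m (μ.mu m) ≤ mkt.mRank m (ν.mu m) :=
  not_iff_not.1 (by simpa only [not_le] using (hμ.mu_lt_iff_nu_lt hν h).symm)

end Decomposition

variable (mkt) in
/-- The stable matchings of a market, ordered by woman-dominance. -/
def StableMatching : Type _ := {μ : Matching M W // mkt.Stable μ}

namespace StableMatching

variable {a b : mkt.StableMatching}

/-- The vector of ranks that the women give to their partners. It embeds the stable matchings into
`W → ℕ` and thereby carries all their order structure. -/
def womenRank (a : mkt.StableMatching) : W → ℕ := fun w => mkt.wRank w (a.1.nu w)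

theorem womenRank_injective : Function.Injective (womenRank (mkt := mkt)) := fun _ _ h =>
  Subtype.ext (Matching.ext_nu fun w => mkt.wRank_inj w (congrFun h w))

instance : PartialOrder mkt.StableMatching := PartialOrder.lift womenRank womenRank_injective

theorem mu_le_mu (h : a ≤ b) (m : M) : mkt.mRank m (b.1.mu m) ≤ mkt.mRank m (a.1.mu m) :=
  a.2.mu_le_of_dom h m

theorem lt_iff_strictDom : a < b ↔ mkt.StrictDom b.1 a.1 :=
  lt_iff_le_and_ne.trans
    (and_congr_right fun _ => ⟨fun h h' => h (Subtype.ext h'.symm), fun h h' => h (h' ▸ rfl)⟩)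

theorem covBy_iff_covers : a ⋖ b ↔ mkt.Covers b.1 a.1 := by
  refine and_congr lt_iff_strictDom ⟨fun h ⟨μ, hμ, hb, ha⟩ => ?_, fun h c hac hcb => ?_⟩
  · exact h (c := ⟨μ, hμ⟩) (lt_iff_strictDom.2 ha) (lt_iff_strictDom.2 hb)
  · exact h ⟨c.1, c.2, lt_iff_strictDom.1 hcb, lt_iff_strictDom.1 hac⟩

variable [Finite W]

instance : Max mkt.StableMatching where
  max a b := ⟨a.1.glue b.1 (fun m => mkt.mRank m (a.1.mu m) ≤ mkt.mRank m (b.1.mu m))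
      (fun w => mkt.wRank w (b.1.nu w) ≤ mkt.wRank w (a.1.nu w))
      (fun _ _ h => b.2.mu_le_iff_nu_le a.2 h) fun _ _ h => (a.2.nu_le_iff_mu_le b.2 h).symm,
    a.2.of_forall_or b.2 fun m w => by unfold Matching.glue; dsimp only; split_ifs <;> grind⟩

instance : Min mkt.StableMatching where
  min a b := ⟨a.1.glue b.1 (fun m => mkt.mRank m (b.1.mu m) ≤ mkt.mRank m (a.1.mu m))
      (fun w => mkt.wRank w (a.1.nu w) ≤ mkt.wRank w (b.1.nu w))
      (fun _ _ h => (b.2.nu_le_iff_mu_le a.2 h).symm) fun _ _ h => a.2.mu_le_iff_nu_le b.2 h,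
    a.2.of_forall_or b.2 fun m w => by unfold Matching.glue; dsimp only; split_ifs <;> grind⟩

theorem womenRank_sup (a b : mkt.StableMatching) :
    womenRank (a ⊔ b) = womenRank a ⊔ womenRank b := by
  funext w
  refine (apply_ite (mkt.wRank w) _ _ _).trans ?_
  rw [sup_comm]
  exact (max_def _ _).symm

theorem womenRank_inf (a b : mkt.StableMatching) :
    womenRank (a ⊓ b) = womenRank a ⊓ womenRank b := by
  funext w
  exact (apply_ite (mkt.wRank w) _ _ _).trans (min_def _ _).symm

instance : DistribLattice mkt.StableMatching :=
  womenRank_injective.distribLattice womenRank Iff.rfl Iff.rfl womenRank_sup womenRank_inf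

instance : WellFoundedLT mkt.StableMatching :=
  StrictMono.wellFoundedLT (f := womenRank) fun _ _ h => h

noncomputable instance : LocallyFiniteOrder mkt.StableMatching :=
  .ofFiniteIcc fun a b => by
    classical
    have := Fintype.ofFinite W
    exact ((Set.finite_Icc (womenRank a) (womenRank b)).preimage womenRank_injective.injOn)

end StableMatching

end Lattice

end Market

/-! ### Cyclic lists and eliminations -/

section CyclicLists

variable {α β : Type*} [DecidableEq α] [DecidableEq β]

theorem formPerm_map_apply_of_mem {f : α → β} {l : List α} (h : (l.map f).Nodup) {x : α}
    (hx : x ∈ l) : (l.map f).formPerm (f x) = f (l.formPerm x) := by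
  obtain ⟨i, hi, rfl⟩ := List.getElem_of_mem hx
  have hmap := List.formPerm_apply_getElem (l.map f) h i (by simpa using hi)
  simpa [List.formPerm_apply_getElem l h.of_map i hi] using hmap

theorem exists_mem_formPerm_eq {l : List α} {y : α} (hy : y ∈ l) :
    ∃ x ∈ l, l.formPerm x = y :=
  ⟨l.formPerm.symm y, List.mem_of_formPerm_apply_mem (by simpa using hy), by simp⟩

theorem formPerm_apply_ne_of_mem {l : List α} (h : l.Nodup) (hl : 2 ≤ l.length) {x : α}
    (hx : x ∈ l) : l.formPerm x ≠ x :=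
  (List.formPerm_apply_mem_ne_self_iff _ h x hx).2 hl

theorem exists_list_forall_formPerm {s : Set α} (hs : s.Finite)
    (hne : s.Nonempty) {R : α → α → Prop} (h : ∀ x ∈ s, ∃ y ∈ s, R x y) :
    ∃ l : List α, l ≠ [] ∧ l.Nodup ∧ ∀ x ∈ l, x ∈ s ∧ R x (l.formPerm x) := by
  obtain ⟨x₀, hx₀⟩ := hne
  have : Nonempty α := ⟨x₀⟩
  choose! f hfs hfR using h
  have iterate_mem (n : ℕ) : f^[n] x₀ ∈ s := (show Set.MapsTo f s s from hfs).iterate n hx₀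
  obtain ⟨i, j, hij, heq⟩ := hs.exists_lt_map_eq_of_forall_mem iterate_mem
  set x := f^[i] x₀ with hx
  have periodic : x ∈ Function.periodicPts f :=
    Function.mk_mem_periodicPts (Nat.sub_pos_of_lt hij) <| by
      rw [Function.IsPeriodicPt, Function.IsFixedPt, hx, ← Function.iterate_add_apply,
        Nat.sub_add_cancel hij.le]
      exact heq.symm
  set l := (List.range (Function.minimalPeriod f x)).map fun n => f^[n] x with hl
  have hnodup : l.Nodup := Function.nodup_periodicOrbit (f := f) (x := x)
  have mem_s {y : α} (hy : y ∈ l) : y ∈ s := by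
    obtain ⟨n, -, rfl⟩ := List.mem_map.1 hy
    rw [hx, ← Function.iterate_add_apply]
    exact iterate_mem _
  refine ⟨l, ?_, hnodup, fun y hy => ⟨mem_s hy, ?_⟩⟩
  · simpa [hl] using (Function.minimalPeriod_pos_of_mem_periodicPts periodic).ne'
  · obtain ⟨n, hn, rfl⟩ := List.getElem_of_mem hy
    rw [List.formPerm_apply_getElem l hnodup n hn]
    have next_eq : l[(n + 1) % l.length]'(Nat.mod_lt _ (n.zero_le.trans_lt hn)) = f l[n] := by
      simp [hl, Function.iterate_mod_minimalPeriod_eq, Function.iterate_succ_apply']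
    exact next_eq ▸ hfR _ (mem_s hy)

end CyclicLists

section Moves

variable {ρ : List (W × M)} {m m' : M} {w w' : W}

theorem rotNext_rotPrev (i : Fin ρ.length) : RotNext ρ (RotPrev ρ i) = i := by
  have hi := i.isLt
  refine Fin.ext ?_
  simp only [RotNext, RotPrev, Nat.mod_add_mod]
  rw [Nat.sub_add_cancel (by lia), Nat.add_mod_right, Nat.mod_eq_of_lt hi]

theorem rotPrev_rotNext (i : Fin ρ.length) : RotPrev ρ (RotNext ρ i) = i :=
  Finite.injective_iff_surjective.2 (fun i => ⟨_, rotNext_rotPrev i⟩) (rotNext_rotPrev _)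

theorem mem_iff_exists_movesManFromTo : (w, m) ∈ ρ ↔ ∃ w', MovesManFromTo ρ m w w' := by
  constructor
  · intro h
    obtain ⟨i, hi⟩ := List.get_of_mem h
    exact ⟨_, i, by rw [hi], by rw [hi], rfl⟩
  · rintro ⟨_, i, rfl, rfl, -⟩
    exact List.get_mem ρ i

theorem MovesWomanFromTo.exists_movesManFromTo (h : MovesWomanFromTo ρ w m m') :
    ∃ w₀, MovesManFromTo ρ m' w₀ w := by
  obtain ⟨i, rfl, -, rfl⟩ := h
  exact ⟨_, RotPrev ρ i, rfl, rfl, by rw [rotNext_rotPrev]⟩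

variable [DecidableEq M] [DecidableEq W]

theorem formPerm_get (h : ρ.Nodup) (i : Fin ρ.length) :
    ρ.formPerm (ρ.get i) = ρ.get (RotNext ρ i) :=
  List.formPerm_apply_getElem ρ h i i.isLt

theorem movesManFromTo_iff_formPerm (h : ρ.Nodup) :
    MovesManFromTo ρ m w w' ↔ (w, m) ∈ ρ ∧ (ρ.formPerm (w, m)).1 = w' := by
  simp only [MovesManFromTo, ← formPerm_get h]
  constructor
  · rintro ⟨i, rfl, rfl, rfl⟩
    exact ⟨List.get_mem ρ i, rfl⟩
  · rintro ⟨hmem, hnext⟩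
    obtain ⟨i, hi⟩ := List.get_of_mem hmem
    exact ⟨i, by rw [hi], by rw [hi], hi ▸ hnext⟩

theorem movesWomanFromTo_iff_formPerm (h : ρ.Nodup) :
    MovesWomanFromTo ρ w m m' ↔ ∃ p ∈ ρ, p.2 = m' ∧ ρ.formPerm p = (w, m) := by
  constructor
  · rintro ⟨i, rfl, rfl, rfl⟩
    exact ⟨_, List.get_mem ρ _, rfl, by rw [formPerm_get h, rotNext_rotPrev]⟩
  · rintro ⟨p, hp, rfl, hnext⟩
    obtain ⟨i, rfl⟩ := List.get_of_mem hp
    rw [formPerm_get h] at hnext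
    exact ⟨RotNext ρ i, by rw [hnext], by rw [hnext], by rw [rotPrev_rotNext]⟩

end Moves

namespace Matching

/-- The matching in which each man takes over the partner that the man `π m` has in `μ`. -/
def permute (μ : Matching M W) (π : Equiv.Perm M) : Matching M W where
  mu m := μ.mu (π m)
  nu w := (μ.nu w).map π.symm
  consistent m w := by simp [μ.consistent, Equiv.symm_apply_eq]

variable {μ μ' : Matching M W} {ρ : List (W × M)}

theorem isElimOf_iff_formPerm [DecidableEq M] [DecidableEq W] : μ'.IsElimOf μ ρ ↔
    2 ≤ ρ.length ∧ (ρ.map Prod.fst).Nodup ∧ (ρ.map Prod.snd).Nodup ∧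
    (∀ p ∈ ρ, μ.nu p.1 = some p.2) ∧ (∀ p ∈ ρ, μ'.nu (ρ.formPerm p).1 = some p.2) ∧
    ∀ w ∉ ρ.map Prod.fst, μ'.nu w = μ.nu w := by
  constructor
  · rintro ⟨hlen, hfst, hsnd, hμ, hμ', -, hw⟩
    refine ⟨hlen, hfst, hsnd, List.forall_mem_iff_get.2 hμ, List.forall_mem_iff_get.2 fun i => ?_,
      hw⟩
    rw [formPerm_get hfst.of_map, ← consistent]
    exact hμ' i
  · rintro ⟨hlen, hfst, hsnd, hμ, hμ', hw⟩
    refine ⟨hlen, hfst, hsnd, List.forall_mem_iff_get.1 hμ, fun i => ?_, fun m hm => ?_, hw⟩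
    · rw [consistent]
      exact formPerm_get hfst.of_map i ▸ hμ' _ (List.get_mem ρ i)
    · refine Option.ext fun w => ?_
      rw [consistent, consistent]
      by_cases hwρ : w ∈ ρ.map Prod.fst
      · obtain ⟨p, hp, rfl⟩ := List.mem_map.1 hwρ
        obtain ⟨q, hq, rfl⟩ := exists_mem_formPerm_eq hp
        rw [hμ _ hp, hμ' q hq, Option.some_inj, Option.some_inj]
        exact iff_of_false (fun h => hm (h ▸ List.mem_map_of_mem hq))
          fun h => hm (h ▸ List.mem_map_of_mem hp)
      · rw [hw w hwρ]

theorem exists_isElimOf (hlen : 2 ≤ ρ.length) (hsnd : (ρ.map Prod.snd).Nodup)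
    (hμ : ∀ p ∈ ρ, μ.nu p.1 = some p.2) : ∃ μ' : Matching M W, μ'.IsElimOf μ ρ := by
  classical
  have hfst : (ρ.map Prod.fst).Nodup := hsnd.of_map.map_on fun p hp q hq h =>
    Prod.ext h (Option.some_injective _ (by rw [← hμ p hp, ← hμ q hq, h]))
  refine ⟨μ.permute (ρ.map Prod.snd).formPerm, isElimOf_iff_formPerm.2
    ⟨hlen, hfst, hsnd, hμ, fun p hp => ?_, fun w hw => ?_⟩⟩
  · simp [permute, hμ _ (List.formPerm_apply_mem_of_mem hp), Equiv.symm_apply_eq,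
      formPerm_map_apply_of_mem hsnd hp]
  · cases h : μ.nu w with
    | none => simp [permute, h]
    | some m =>
      have hm : m ∉ ρ.map Prod.snd := fun hm => by
        obtain ⟨p, hp, rfl⟩ := List.mem_map.1 hm
        have := Option.some_injective _ <|
          ((μ.consistent _ _).2 h).symm.trans ((μ.consistent _ _).2 (hμ p hp))
        exact hw (this ▸ List.mem_map_of_mem hp)
      simp [permute, h, Equiv.symm_apply_eq, List.formPerm_apply_of_notMem hm]

namespace IsElimOf

variable {ν ν' : Matching M W} {τ : List (W × M)} {m m' : M} {w w' : W}

theorem movesWomanFromTo_iff (h : μ'.IsElimOf μ ρ) :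
    MovesWomanFromTo ρ w m m' ↔ μ.nu w = some m ∧ μ'.nu w = some m' ∧ m ≠ m' := by
  classical
  obtain ⟨hlen, hfst, hsnd, hμ, hμ', hw⟩ := isElimOf_iff_formPerm.1 h
  rw [movesWomanFromTo_iff_formPerm hfst.of_map]
  constructor
  · rintro ⟨p, hp, rfl, hnext⟩
    have hnext_mem := List.formPerm_apply_mem_of_mem hp
    have hne := formPerm_apply_ne_of_mem hfst.of_map hlen hp
    have hsnd_ne := mt (List.inj_on_of_nodup_map hsnd hnext_mem hp) hne
    rw [hnext] at hnext_mem hsnd_ne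
    have hp' := hμ' p hp
    rw [hnext] at hp'
    exact ⟨hμ _ hnext_mem, hp', hsnd_ne⟩
  · rintro ⟨hwm, hwm', hne⟩
    have hwρ : w ∈ ρ.map Prod.fst := by_contra fun hwρ =>
      hne (Option.some_injective _ (by rw [← hwm, ← hwm', hw w hwρ]))
    obtain ⟨q, hq, rfl⟩ := List.mem_map.1 hwρ
    obtain ⟨p, hp, rfl⟩ := exists_mem_formPerm_eq hq
    refine ⟨p, hp, Option.some_injective _ ((hμ' p hp).symm.trans hwm'), Prod.ext rfl ?_⟩
    exact Option.some_injective _ ((hμ _ hq).symm.trans hwm)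

theorem movesManFromTo_iff (h : μ'.IsElimOf μ ρ) :
    MovesManFromTo ρ m w w' ↔ μ.mu m = some w ∧ μ'.mu m = some w' ∧ w ≠ w' := by
  classical
  obtain ⟨hlen, hfst, -, hμ, hμ', hw⟩ := isElimOf_iff_formPerm.1 h
  rw [movesManFromTo_iff_formPerm hfst.of_map]
  constructor
  · rintro ⟨hp, rfl⟩
    have hne := formPerm_apply_ne_of_mem hfst.of_map hlen hp
    exact ⟨(μ.consistent _ _).2 (hμ _ hp), (μ'.consistent _ _).2 (hμ' _ hp),
      fun heq =>
        hne (List.inj_on_of_nodup_map hfst (List.formPerm_apply_mem_of_mem hp) hp heq.symm)⟩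
  · rintro ⟨hmw, hmw', hne⟩
    have hwρ : w ∈ ρ.map Prod.fst := by_contra fun hwρ => by
      have := (μ'.consistent m w).2 ((hw w hwρ).trans ((μ.consistent m w).1 hmw))
      exact hne (Option.some_injective _ (this.symm.trans hmw'))
    obtain ⟨⟨w, m₀⟩, hp, rfl⟩ := List.mem_map.1 hwρ
    obtain rfl : m₀ = m :=
      Option.some_injective _ ((hμ _ hp).symm.trans ((μ.consistent _ _).1 hmw))
    exact ⟨hp, Option.some_injective _
      (((μ'.consistent _ _).2 (hμ' _ hp)).symm.trans hmw')⟩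

theorem exists_movesWomanFromTo (h : μ'.IsElimOf μ ρ) (hw : μ'.nu w ≠ μ.nu w) :
    ∃ m m', MovesWomanFromTo ρ w m m' := by
  classical
  obtain ⟨-, hfst, -, -, -, hfix⟩ := isElimOf_iff_formPerm.1 h
  obtain ⟨q, hq, rfl⟩ := List.mem_map.1 (by_contra fun hwρ => hw (hfix w hwρ))
  obtain ⟨p, hp, rfl⟩ := exists_mem_formPerm_eq hq
  exact ⟨_, _, (movesWomanFromTo_iff_formPerm hfst.of_map).2 ⟨p, hp, rfl, rfl⟩⟩

theorem exists_movesManFromTo (h : μ'.IsElimOf μ ρ) (hm : μ'.mu m ≠ μ.mu m) :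
    ∃ w w', MovesManFromTo ρ m w w' := by
  have hmρ : m ∈ ρ.map Prod.snd := by_contra fun hmρ => hm (h.2.2.2.2.2.1 m hmρ)
  obtain ⟨p, hp, rfl⟩ := List.mem_map.1 hmρ
  exact ⟨p.1, mem_iff_exists_movesManFromTo.1 hp⟩

theorem mem_iff (h : μ'.IsElimOf μ ρ) :
    (w, m) ∈ ρ ↔ μ.mu m = some w ∧ μ'.mu m ≠ μ.mu m := by
  rw [mem_iff_exists_movesManFromTo]
  constructor
  · rintro ⟨w', hw'⟩
    obtain ⟨hμ, hμ', hne⟩ := h.movesManFromTo_iff.1 hw'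
    exact ⟨hμ, by simpa [hμ, hμ'] using hne.symm⟩
  · rintro ⟨hμ, hne⟩
    obtain ⟨w₁, w', hw'⟩ := h.exists_movesManFromTo hne
    obtain rfl : w₁ = w := Option.some_injective _ ((h.movesManFromTo_iff.1 hw').1.symm.trans hμ)
    exact ⟨w', hw'⟩

protected theorem ne (h : μ'.IsElimOf μ ρ) : μ' ≠ μ := by
  rintro rfl
  have hne : ρ ≠ [] := List.ne_nil_of_length_pos (by have := h.1; lia)
  obtain ⟨p, hp⟩ := List.exists_mem_of_ne_nil ρ hne
  exact ((h.mem_iff (w := p.1) (m := p.2)).1 hp).2 rfl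

theorem nu_eq_or_nu_eq (h : μ'.IsElimOf μ ρ) (h' : ν'.IsElimOf ν ρ) (w : W) :
    (μ.nu w = ν.nu w ∧ μ'.nu w = ν'.nu w) ∨ (μ'.nu w = μ.nu w ∧ ν'.nu w = ν.nu w) := by
  by_cases hw : ∃ m m', MovesWomanFromTo ρ w m m'
  · obtain ⟨m, m', hm⟩ := hw
    have hμ := h.movesWomanFromTo_iff.1 hm
    have hν := h'.movesWomanFromTo_iff.1 hm
    exact .inl ⟨hμ.1.trans hν.1.symm, hμ.2.1.trans hν.2.1.symm⟩
  · exact .inr ⟨not_not.1 (mt h.exists_movesWomanFromTo hw),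
      not_not.1 (mt h'.exists_movesWomanFromTo hw)⟩

theorem mu_eq_or_mu_eq (h : μ'.IsElimOf μ ρ) (h' : ν'.IsElimOf ν ρ) (m : M) :
    (μ.mu m = ν.mu m ∧ μ'.mu m = ν'.mu m) ∨ (μ'.mu m = μ.mu m ∧ ν'.mu m = ν.mu m) := by
  by_cases hm : ∃ w w', MovesManFromTo ρ m w w'
  · obtain ⟨w, w', hw⟩ := hm
    have hμ := h.movesManFromTo_iff.1 hw
    have hν := h'.movesManFromTo_iff.1 hw
    exact .inl ⟨hμ.1.trans hν.1.symm, hμ.2.1.trans hν.2.1.symm⟩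
  · exact .inr ⟨not_not.1 (mt h.exists_movesManFromTo hm),
      not_not.1 (mt h'.exists_movesManFromTo hm)⟩

theorem congr_of_nu (h : μ'.IsElimOf μ ρ)
    (hne : ∀ w, μ'.nu w ≠ μ.nu w → ν.nu w = μ.nu w ∧ ν'.nu w = μ'.nu w)
    (heq : ∀ w, μ'.nu w = μ.nu w → ν'.nu w = ν.nu w) : ν'.IsElimOf ν ρ := by
  classical
  have ⟨hlen, hfst, hsnd, hμ, hμ', hfix⟩ := isElimOf_iff_formPerm.1 h
  have moved {p : W × M} (hp : p ∈ ρ) : μ'.nu p.1 ≠ μ.nu p.1 := fun he => by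
    have := (h.mem_iff (w := p.1) (m := p.2)).1 hp
    exact this.2 (((μ'.consistent _ _).2 (he.trans (hμ p hp))).trans this.1.symm)
  refine isElimOf_iff_formPerm.2 ⟨hlen, hfst, hsnd, fun p hp => ?_, fun p hp => ?_,
    fun w hw => heq w (hfix w hw)⟩
  · rw [(hne _ (moved hp)).1, hμ p hp]
  · rw [(hne _ (moved (List.formPerm_apply_mem_of_mem hp))).2, hμ' p hp]

theorem of_isRotated (h : μ'.IsElimOf μ ρ) (hr : ρ ~r τ) : μ'.IsElimOf μ τ := by
  classical
  obtain ⟨hlen, hfst, hsnd, hμ, hμ', hfix⟩ := isElimOf_iff_formPerm.1 h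
  rw [isElimOf_iff_formPerm, ← hr.perm.length_eq, ← (hr.map Prod.fst).nodup_iff,
    ← (hr.map Prod.snd).nodup_iff, ← List.formPerm_eq_of_isRotated hfst.of_map hr]
  simp only [← hr.mem_iff, ← (hr.map Prod.fst).mem_iff]
  exact ⟨hlen, hfst, hsnd, hμ, hμ', hfix⟩

theorem isRotated (h : μ'.IsElimOf μ ρ) (h' : μ'.IsElimOf μ τ) : ρ ~r τ := by
  classical
  obtain ⟨hlen, hfst, -, -, hμ', -⟩ := isElimOf_iff_formPerm.1 h
  obtain ⟨-, hfst', -, -, hμ'', -⟩ := isElimOf_iff_formPerm.1 h'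
  have mem_iff_mem (p : W × M) : p ∈ ρ ↔ p ∈ τ := h.mem_iff.trans h'.mem_iff.symm
  have formPerm_eq : ρ.formPerm = τ.formPerm := Equiv.ext fun p => by
    by_cases hp : p ∈ ρ
    · have hp' := (mem_iff_mem p).1 hp
      have hfst_eq : (ρ.formPerm p).1 = (τ.formPerm p).1 := Option.some_injective _ <|
        ((μ'.consistent _ _).2 (hμ' p hp)).symm.trans ((μ'.consistent _ _).2 (hμ'' p hp'))
      exact List.inj_on_of_nodup_map hfst (List.formPerm_apply_mem_of_mem hp)
        ((mem_iff_mem _).2 (List.formPerm_apply_mem_of_mem hp')) hfst_eq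
    · rw [List.formPerm_apply_of_notMem hp, List.formPerm_apply_of_notMem (mt (mem_iff_mem p).2 hp)]
  exact ((List.formPerm_eq_formPerm_iff hfst.of_map hfst'.of_map).1 formPerm_eq).resolve_right
    fun hle => hle.1.not_gt hlen

end IsElimOf

end Matching

/-! ### Covers are eliminations -/

namespace Market

section NextWoman

variable {mkt : Market M W} {μ μ' ν : Matching M W} {ρ : List (W × M)} {m : M} {w : W}

variable (mkt) in
/-- Among the women who prefer `m` to their partner in `μ`, `w` is the one that `m` likes best. If
`μ` is stable, then `m` likes all of them less than his partner, and `w` is the woman to whom a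
rotation exposed in `μ` moves `m`. -/
structure IsNextWoman (μ : Matching M W) (m : M) (w : W) : Prop where
  nu_lt : mkt.wRank w (μ.nu w) < mkt.wRank w (some m)
  some_le : ∀ w', mkt.wRank w' (μ.nu w') < mkt.wRank w' (some m) →
    mkt.mRank m (some w') ≤ mkt.mRank m (some w)

theorem Stable.exists_isNextWoman [Finite W] (hμ : mkt.Stable μ) (hν : mkt.Stable ν)
    (h : mkt.mRank m (ν.mu m) < mkt.mRank m (μ.mu m)) :
    ∃ w m', mkt.IsNextWoman μ m w ∧ mkt.mRank m (ν.mu m) ≤ mkt.mRank m (some w) ∧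
      μ.nu w = some m' ∧ mkt.mRank m' (ν.mu m') < mkt.mRank m' (μ.mu m') := by
  obtain ⟨w₀, hw₀⟩ := hν.exists_mu_eq_some_of_lt h
  obtain ⟨m₀, w₁, hm₀, hw₁, hlt₁⟩ :=
    hν.exists_nu_eq_some_and_nu_eq_some hμ (hν.nu_lt_of_mu_lt hw₀ h)
  obtain rfl : m₀ = m := Option.some_injective _ (hm₀.symm.trans ((μ.consistent _ _).1 hw₀))
  obtain ⟨w, hw, hmax⟩ := Set.exists_max_image
    {w | mkt.wRank w (μ.nu w) < mkt.wRank w (some m₀)} (fun w => mkt.mRank m₀ (some w))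
    (Set.toFinite _) ⟨w₁, hw₁ ▸ hlt₁⟩
  have hνw : mkt.mRank m₀ (ν.mu m₀) ≤ mkt.mRank m₀ (some w) :=
    (ν.consistent m₀ w₁).2 hw₁ ▸ hmax w₁ (hw₁ ▸ hlt₁)
  have hlt : mkt.wRank w (μ.nu w) < mkt.wRank w (ν.nu w) :=
    lt_of_lt_of_le hw (not_lt.1 fun hlt => (hν.some_lt_mu hlt).not_ge hνw)
  obtain ⟨m', _, hm', -⟩ := hν.exists_nu_eq_some_and_nu_eq_some hμ hlt
  exact ⟨w, m', ⟨hw, hmax⟩, hνw, hm',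
    (hν.nu_lt_iff_mu_lt hμ ((μ.consistent _ _).2 hm')).1 hlt⟩

theorem dom_of_isElimOf (helim : μ'.IsElimOf μ ρ)
    (hnext : ∀ m w w', MovesManFromTo ρ m w w' → mkt.IsNextWoman μ m w') : mkt.Dom μ' μ := by
  intro w
  by_cases hw : μ'.nu w = μ.nu w
  · rw [hw]
  · obtain ⟨m, m', hm⟩ := helim.exists_movesWomanFromTo hw
    obtain ⟨w₀, hw₀⟩ := hm.exists_movesManFromTo
    rw [(helim.movesWomanFromTo_iff.1 hm).2.1]
    exact (hnext m' w₀ w hw₀).nu_lt.le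

theorem Stable.of_isElimOf (hμ : mkt.Stable μ) (helim : μ'.IsElimOf μ ρ)
    (hnext : ∀ m w w', MovesManFromTo ρ m w w' → mkt.IsNextWoman μ m w')
    (hir : ∀ m w w', MovesManFromTo ρ m w w' → mkt.mRank m none ≤ mkt.mRank m (some w')) :
    mkt.Stable μ' := by
  have hdom := dom_of_isElimOf helim hnext
  refine stable_of_none_le (fun m w hmw => ?_)
    (fun w m hwm => hwm ▸ (hμ.none_le_nu w).trans (hdom w)) fun m w hm => not_lt.1 fun hw => ?_
  · by_cases hm : μ'.mu m = μ.mu m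
    · exact (hμ.1.1 m w (hm ▸ hmw)).le
    · obtain ⟨w₀, w', hw'⟩ := helim.exists_movesManFromTo hm
      obtain rfl : w' = w :=
        Option.some_injective _ ((helim.movesManFromTo_iff.1 hw').2.1.symm.trans hmw)
      exact hir m w₀ w' hw'
  · have hw' := (hdom w).trans_lt hw
    by_cases hm' : μ'.mu m = μ.mu m
    · exact (hμ.some_lt_mu hw').not_gt (hm' ▸ hm)
    · obtain ⟨w₀, w₁, hw₁⟩ := helim.exists_movesManFromTo hm'
      rw [(helim.movesManFromTo_iff.1 hw₁).2.1] at hm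
      exact ((hnext m w₀ w₁ hw₁).some_le w hw').not_gt hm

end NextWoman

namespace StableMatching

variable [Finite W] {mkt : Market M W} {a b : mkt.StableMatching}

theorem exists_rotation_of_lt (hab : a < b) :
    ∃ ρ : List (W × M), 2 ≤ ρ.length ∧ (ρ.map Prod.snd).Nodup ∧ (∀ p ∈ ρ, a.1.nu p.1 = some p.2) ∧
      ∀ m w w', MovesManFromTo ρ m w w' →
        mkt.IsNextWoman a.1 m w' ∧ mkt.mRank m (b.1.mu m) ≤ mkt.mRank m (some w') := by
  classical
  obtain ⟨-, w₁, hw₁⟩ := Pi.lt_def.1 (show womenRank a < womenRank b from hab)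
  obtain ⟨m₁, -, hm₁, -⟩ := b.2.exists_nu_eq_some_and_nu_eq_some a.2 hw₁
  let s : Set (W × M) :=
    {p | a.1.nu p.1 = some p.2 ∧ mkt.mRank p.2 (b.1.mu p.2) < mkt.mRank p.2 (a.1.mu p.2)}
  have snd_eq {p q : W × M} (hp : p ∈ s) (hq : q ∈ s) (h : p.1 = q.1) : p.2 = q.2 :=
    Option.some_injective _ (by rw [← hp.1, ← hq.1, h])
  have fst_eq {p q : W × M} (hp : p ∈ s) (hq : q ∈ s) (h : p.2 = q.2) : p.1 = q.1 :=
    Option.some_injective _ <| by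
      rw [← (a.1.consistent _ _).2 hp.1, ← (a.1.consistent _ _).2 hq.1, h]
  have s_finite : s.Finite :=
    Set.Finite.of_injOn (Set.mapsTo_univ Prod.fst s)
      (fun p hp q hq h => Prod.ext h (snd_eq hp hq h)) Set.finite_univ
  obtain ⟨ρ, hne, hnodup, hρ⟩ := exists_list_forall_formPerm s_finite
    ⟨(w₁, m₁), hm₁, (b.2.nu_lt_iff_mu_lt a.2 ((a.1.consistent _ _).2 hm₁)).1 hw₁⟩
    (R := fun p q => mkt.IsNextWoman a.1 p.2 q.1 ∧
      mkt.mRank p.2 (b.1.mu p.2) ≤ mkt.mRank p.2 (some q.1))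
    fun p hp => by
      obtain ⟨w, m, hnext, hle, hm, hlt⟩ := a.2.exists_isNextWoman b.2 hp.2
      exact ⟨(w, m), ⟨hm, hlt⟩, hnext, hle⟩
  have hlen : 2 ≤ ρ.length := by
    by_contra! hlen
    obtain ⟨p, hp⟩ := List.exists_mem_of_ne_nil ρ hne
    have hnext := (hρ p hp).2.1.nu_lt
    rw [(List.formPerm_eq_one_iff _ hnodup).2 (by lia)] at hnext
    exact hnext.ne (congrArg _ (hρ p hp).1.1)
  refine ⟨ρ, hlen, hnodup.map_on fun p hp q hq h => Prod.ext (fst_eq (hρ p hp).1 (hρ q hq).1 h) h,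
    fun p hp => (hρ p hp).1.1, fun m w w' hmove => ?_⟩
  obtain ⟨hmem, rfl⟩ := (movesManFromTo_iff_formPerm hnodup).1 hmove
  exact (hρ _ hmem).2

theorem exists_isElimOf_of_covBy (hab : a ⋖ b) : ∃ ρ : List (W × M), b.1.IsElimOf a.1 ρ := by
  classical
  obtain ⟨ρ, hlen, hsnd, ha, hnext⟩ := exists_rotation_of_lt hab.lt
  obtain ⟨μ, hμ⟩ := Matching.exists_isElimOf hlen hsnd ha
  have hstable : mkt.Stable μ := a.2.of_isElimOf hμ (fun m w w' h => (hnext m w w' h).1)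
    fun m w w' h => (b.2.none_le_mu m).trans (hnext m w w' h).2
  let c : mkt.StableMatching := ⟨μ, hstable⟩
  have hac : a ≤ c := dom_of_isElimOf hμ fun m w w' h => (hnext m w w' h).1
  have hcb : c ≤ b := by
    intro w
    by_cases hw : μ.nu w = a.1.nu w
    · exact (congrArg (mkt.wRank w) hw).trans_le (hab.le w)
    · obtain ⟨m, m', hm⟩ := hμ.exists_movesWomanFromTo hw
      obtain ⟨w₀, hw₀⟩ := hm.exists_movesManFromTo
      refine (congrArg (mkt.wRank w) (hμ.movesWomanFromTo_iff.1 hm).2.1).trans_le ?_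
      exact not_lt.1 fun hlt => (b.2.some_lt_mu hlt).not_ge (hnext m' w₀ w hw₀).2
  have hcb : c = b := (hab.eq_or_eq hac hcb).resolve_left fun h => hμ.ne (congrArg Subtype.val h)
  exact ⟨ρ, hcb ▸ hμ⟩

end StableMatching

end Market

/-! ### Rotations as labels of the Hasse diagram -/

namespace Market

namespace StableMatching

variable {mkt : Market M W} {a b c x x' y : mkt.StableMatching} {ρ τ : List (W × M)} {w : W}

/-- `b` covers `a`, and `ρ` is the rotation leading from `a` to `b`: the Hasse diagram of the stable
matchings has an edge `a ⋖ b` labelled `ρ`. -/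
structure StepBy (ρ : List (W × M)) (a b : mkt.StableMatching) : Prop where
  covBy : a ⋖ b
  isElimOf : b.1.IsElimOf a.1 ρ

/-- In `c`, each woman whom `ρ` moves is at least as well off as `ρ` makes her. If `ρ` is a rotation
and `c` is reached by a maximal chain from the man-optimal stable matching, this says that the chain
contains a step labelled `ρ`. -/
def Eliminated (ρ : List (W × M)) (c : mkt.StableMatching) : Prop :=
  ∀ w m m', MovesWomanFromTo ρ w m m' → mkt.wRank w (some m') ≤ womenRank c w

theorem inPi_iff_exists_stepBy :
    mkt.InPi ρ ↔ ∃ a b : mkt.StableMatching, StepBy ρ a b := by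
  constructor
  · rintro ⟨μ, hμ, μ', helim, hμ', hcov⟩
    exact ⟨⟨μ, hμ⟩, ⟨μ', hμ'⟩, covBy_iff_covers.2 hcov, helim⟩
  · rintro ⟨a, b, hab⟩
    exact ⟨a.1, a.2, b.1, hab.isElimOf, b.2, covBy_iff_covers.1 hab.covBy⟩

theorem nu_eq_nu_iff : a.1.nu w = b.1.nu w ↔ womenRank a w = womenRank b w :=
  (mkt.wRank_inj w).eq_iff.symm

theorem Eliminated.mono (h : Eliminated ρ a) (hab : a ≤ b) : Eliminated ρ b :=
  fun w m m' hm => (h w m m' hm).trans (hab w)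

theorem StepBy.of_isRotated (h : StepBy ρ a b) (hr : ρ ~r τ) : StepBy τ a b :=
  ⟨h.covBy, h.isElimOf.of_isRotated hr⟩

theorem StepBy.movesWomanFromTo_iff_of_isRotated (h : StepBy ρ a b) (hr : ρ ~r τ) {w : W}
    {m m' : M} : MovesWomanFromTo ρ w m m' ↔ MovesWomanFromTo τ w m m' :=
  h.isElimOf.movesWomanFromTo_iff.trans (h.of_isRotated hr).isElimOf.movesWomanFromTo_iff.symm

theorem StepBy.pred_iff_of_isRotated (h : StepBy ρ a b) (hr : ρ ~r τ) {σ : List (W × M)} :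
    mkt.Pred ρ σ ↔ mkt.Pred τ σ := by
  simp only [Pred, Type1Pred, Type2Pred, h.movesWomanFromTo_iff_of_isRotated hr,
    h.isElimOf.movesManFromTo_iff, (h.of_isRotated hr).isElimOf.movesManFromTo_iff]

theorem StepBy.eliminated_iff_of_isRotated (h : StepBy ρ a b) (hr : ρ ~r τ) :
    Eliminated ρ c ↔ Eliminated τ c := by
  simp only [Eliminated, h.movesWomanFromTo_iff_of_isRotated hr]

variable [Finite W]

theorem exists_stepBy_of_covBy (h : a ⋖ b) : ∃ ρ, StepBy ρ a b :=
  (exists_isElimOf_of_covBy h).imp fun _ => .mk h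

theorem womenRank_sup_apply (a b : mkt.StableMatching) (w : W) :
    womenRank (a ⊔ b) w = max (womenRank a w) (womenRank b w) :=
  congrFun (womenRank_sup a b) w

theorem womenRank_inf_apply (a b : mkt.StableMatching) (w : W) :
    womenRank (a ⊓ b) w = min (womenRank a w) (womenRank b w) :=
  congrFun (womenRank_inf a b) w

theorem StepBy.eliminated_iff (h : StepBy ρ a b) : Eliminated ρ c ↔ b ≤ c ⊔ a := by
  constructor
  · intro hρ w
    change womenRank b w ≤ womenRank (c ⊔ a) w
    rw [womenRank_sup_apply]
    by_cases hw : b.1.nu w = a.1.nu w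
    · exact (nu_eq_nu_iff.1 hw).trans_le (le_max_right _ _)
    · obtain ⟨m, m', hm⟩ := h.isElimOf.exists_movesWomanFromTo hw
      refine le_max_of_le_left (le_trans (le_of_eq ?_) (hρ w m m' hm))
      exact congrArg (mkt.wRank w) (h.isElimOf.movesWomanFromTo_iff.1 hm).2.1
  · intro hb w m m' hm
    obtain ⟨ha, hb', hne⟩ := h.isElimOf.movesWomanFromTo_iff.1 hm
    have hlt : womenRank a w < womenRank b w := lt_of_le_of_ne (h.covBy.le w) fun he =>
      hne (Option.some_injective _ (ha.symm.trans ((nu_eq_nu_iff.2 he).trans hb')))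
    have hle : womenRank b w ≤ max (womenRank c w) (womenRank a w) :=
      womenRank_sup_apply c a w ▸ hb w
    exact hb' ▸ (le_max_iff.1 hle).resolve_right hlt.not_ge

theorem StepBy.eliminated (h : StepBy ρ a b) : Eliminated ρ b :=
  h.eliminated_iff.2 le_sup_left

theorem StepBy.not_eliminated_of_le (h : StepBy ρ a b) (hc : c ≤ a) : ¬ Eliminated ρ c :=
  fun hρ => h.covBy.lt.not_ge ((h.eliminated_iff.1 hρ).trans (sup_le hc le_rfl))

theorem StepBy.sup_of_inf_eq (h : StepBy ρ a b) (hx : x ⊓ b = a) : StepBy ρ x (x ⊔ b) := by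
  have hinf w : min (womenRank x w) (womenRank b w) = womenRank a w := by
    rw [← womenRank_inf_apply, hx]
  refine ⟨covBy_sup_of_inf_covBy_right (hx ▸ h.covBy),
    h.isElimOf.congr_of_nu (fun w => ?_) fun w => ?_⟩
  all_goals
    simp only [ne_eq, nu_eq_nu_iff, womenRank_sup_apply]
    grind

theorem StepBy.sup_of_le (h : StepBy ρ a b) (hx : a ≤ x) (hb : ¬ b ≤ x) : StepBy ρ x (x ⊔ b) :=
  h.sup_of_inf_eq <| (h.covBy.eq_or_eq (le_inf hx h.covBy.le) inf_le_right).resolve_right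
    fun he => hb (inf_eq_right.1 he)

theorem StepBy.isRotated_of_eliminated (h : StepBy ρ a b) (hτ : mkt.InPi τ)
    (ha : ¬ Eliminated τ a) (hb : Eliminated τ b) : ρ ~r τ := by
  obtain ⟨a', b', h'⟩ := inPi_iff_exists_stepBy.1 hτ
  rw [h'.eliminated_iff] at ha hb
  have hτx : StepBy τ (a ⊔ a') (a ⊔ a' ⊔ b') := h'.sup_of_le le_sup_right ha
  have hρx : StepBy ρ (a ⊔ a') (a ⊔ a' ⊔ b) := h.sup_of_le le_sup_left fun hle =>
    ha (hb.trans (sup_le hle le_sup_right))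
  have hle : a ⊔ a' ⊔ b' ≤ a ⊔ a' ⊔ b :=
    sup_le le_sup_left (hb.trans (sup_le le_sup_right (le_sup_right.trans le_sup_left)))
  have heq : a ⊔ a' ⊔ b' = a ⊔ a' ⊔ b :=
    (hρx.covBy.eq_or_eq hτx.covBy.le hle).resolve_left hτx.covBy.lt.ne'
  exact hρx.isElimOf.isRotated (heq ▸ hτx.isElimOf)

end StableMatching

end Market

/-! ### Exchange of consecutive rotations -/

namespace Market.StableMatching

variable {mkt : Market M W} {c x x' y : mkt.StableMatching} {μ σ : Matching M W}
  {ρ τ : List (W × M)}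

theorem StepBy.nu_eq_of_not_type1Pred (hτ : StepBy τ y x) (hρ : StepBy ρ x x')
    (h : ¬ mkt.Type1Pred τ ρ) {p : W × M} (hp : p ∈ ρ) : y.1.nu p.1 = some p.2 := by
  have hpx : x.1.mu p.2 = some p.1 := (hρ.isElimOf.mem_iff.1 hp).1
  rw [← Matching.consistent, ← hpx]
  by_contra hne
  obtain ⟨w₀, w, hw⟩ := hτ.isElimOf.exists_movesManFromTo (Ne.symm hne)
  obtain rfl : w = p.1 :=
    Option.some_injective _ ((hτ.isElimOf.movesManFromTo_iff.1 hw).2.1.symm.trans hpx)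
  exact h ⟨p.1, p.2, ⟨w₀, hw⟩, hp⟩

theorem StepBy.dom_of_isElimOf (hρ : StepBy ρ x x') (hσ : σ.IsElimOf μ ρ) : mkt.Dom σ μ := by
  intro w
  rcases hσ.nu_eq_or_nu_eq hρ.isElimOf w with ⟨h₁, h₂⟩ | ⟨h, -⟩
  · rw [h₁, h₂]
    exact hρ.covBy.le w
  · rw [h]

theorem StepBy.mu_le_of_isElimOf (hρ : StepBy ρ x x') (hyx : y ≤ x) (hσ : σ.IsElimOf y.1 ρ)
    (m : M) : mkt.mRank m (x'.1.mu m) ≤ mkt.mRank m (σ.mu m) := by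
  rcases hσ.mu_eq_or_mu_eq hρ.isElimOf m with ⟨-, h⟩ | ⟨h₁, h₂⟩
  · rw [h]
  · rw [h₁, h₂]
    exact mu_le_mu hyx m

-- If `(m, w)` blocks `σ`, then `m` is moved by `ρ` and not by `τ`, and `w` by `τ` and not by `ρ`:
-- otherwise `(m, w)` blocks `y` or `x'`.
theorem StepBy.stable_of_not_type2Pred (hτ : StepBy τ y x) (hρ : StepBy ρ x x')
    (h : ¬ mkt.Type2Pred τ ρ) (hσ : σ.IsElimOf y.1 ρ) : mkt.Stable σ := by
  have hx'σ := hρ.mu_le_of_isElimOf hτ.covBy.le hσ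
  have hyσ := hρ.dom_of_isElimOf hσ
  refine stable_of_none_le (fun m w hmw => hmw ▸ (x'.2.none_le_mu m).trans (hx'σ m))
    (fun w m hwm => hwm ▸ (y.2.none_le_nu w).trans (hyσ w)) fun m w hm => not_lt.1 fun hw => ?_
  have hwx' := x'.2.some_lt_nu ((hx'σ m).trans_lt hm)
  have hmy := y.2.some_lt_mu ((hyσ w).trans_lt hw)
  obtain ⟨hymu, hσmu⟩ :=
    (hσ.mu_eq_or_mu_eq hρ.isElimOf m).resolve_right fun h => hm.not_gt (h.1 ▸ hmy)
  obtain ⟨hσnu, hxnu⟩ :=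
    (hσ.nu_eq_or_nu_eq hρ.isElimOf w).resolve_left fun h => hw.not_gt (h.2 ▸ hwx')
  rw [hσmu] at hm
  rw [hσnu] at hw
  rw [hxnu] at hwx'
  rw [hymu] at hmy
  obtain ⟨mlo, mhi, hτw⟩ := hτ.isElimOf.exists_movesWomanFromTo (w := w)
    fun he => (hw.trans hwx').ne (he ▸ rfl)
  obtain ⟨whi, wlo, hρm⟩ := hρ.isElimOf.exists_movesManFromTo (m := m)
    fun he => (hm.trans hmy).ne (he ▸ rfl)
  obtain ⟨hlo, hhi, -⟩ := hτ.isElimOf.movesWomanFromTo_iff.1 hτw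
  obtain ⟨hwhi, hwlo, -⟩ := hρ.isElimOf.movesManFromTo_iff.1 hρm
  exact h ⟨m, w, mlo, mhi, whi, wlo, hτw, hlo ▸ hw, hhi ▸ hwx', hρm, hwlo ▸ hm, hwhi ▸ hmy⟩

theorem StepBy.exists_stepBy_of_not_pred [Finite W] (hτ : StepBy τ y x) (hρ : StepBy ρ x x')
    (h : ¬ mkt.Pred τ ρ) : ∃ z, StepBy ρ y z := by
  classical
  obtain ⟨h₁, h₂⟩ := not_or.1 h
  obtain ⟨σ, hσ⟩ := Matching.exists_isElimOf hρ.isElimOf.1 hρ.isElimOf.2.2.1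
    fun p => hτ.nu_eq_of_not_type1Pred hρ h₁
  let z : mkt.StableMatching := ⟨σ, hτ.stable_of_not_type2Pred hρ h₂ hσ⟩
  have hz w : womenRank y w = womenRank x w ∧ womenRank z w = womenRank x' w ∨
      womenRank z w = womenRank y w ∧ womenRank x' w = womenRank x w := by
    simpa only [← nu_eq_nu_iff] using hσ.nu_eq_or_nu_eq hρ.isElimOf w
  have hyx w : womenRank y w ≤ womenRank x w := hτ.covBy.le w
  have hxx' w : womenRank x w ≤ womenRank x' w := hρ.covBy.le w
  have hsup : x ⊔ z = x' := womenRank_injective <| funext fun w => by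
    rw [womenRank_sup_apply]
    grind
  have hinf : x ⊓ z = y := womenRank_injective <| funext fun w => by
    rw [womenRank_inf_apply]
    grind
  exact ⟨z, hinf ▸ inf_covBy_of_covBy_sup_left (hsup.symm ▸ hρ.covBy), hσ⟩

theorem exists_stepBy_of_forall_pred_eliminated [Finite W] (hρ : mkt.InPi ρ)
    (hc : ¬ Eliminated ρ c) (hpred : ∀ τ, mkt.InPi τ → mkt.Pred τ ρ → Eliminated τ c) :
    ∃ d, StepBy ρ c d := by
  obtain ⟨a, b, hab⟩ := inPi_iff_exists_stepBy.1 hρ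
  have hne : {x | c ≤ x ∧ ∃ d, StepBy ρ x d}.Nonempty :=
    ⟨c ⊔ a, le_sup_left, _, hab.sup_of_le le_sup_right (mt hab.eliminated_iff.2 hc)⟩
  obtain ⟨x, ⟨hcx, x', hxx'⟩, hmin⟩ := WellFounded.has_min wellFounded_lt _ hne
  rcases hcx.eq_or_lt with rfl | hlt
  · exact ⟨x', hxx'⟩
  obtain ⟨y, hcy, hyx⟩ := exists_le_covBy_of_lt hlt
  obtain ⟨τ, hτ⟩ := exists_stepBy_of_covBy hyx
  have hnot : ¬ mkt.Pred τ ρ := fun h =>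
    hτ.not_eliminated_of_le hcy (hpred τ (inPi_iff_exists_stepBy.2 ⟨y, x, hτ⟩) h)
  exact absurd hyx.lt (hmin y ⟨hcy, hτ.exists_stepBy_of_not_pred hxx' hnot⟩)

end Market.StableMatching

/-! ### Topological sorts -/

namespace Market

variable {mkt : Market M W} {k : ℕ} {ρ : Fin k → List (W × M)}

variable (mkt) in
/-- The finite sequence `ρ` is a topological sort of the predecessor graph `G(Π)`. A rotation is a
cyclic list, so it is to be listed exactly once up to `List.IsRotated`. -/
structure IsTopologicalSort (ρ : Fin k → List (W × M)) : Prop where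
  inPi (i : Fin k) : mkt.InPi (ρ i)
  existsUnique (σ : List (W × M)) : mkt.InPi σ → ∃! i, ρ i ~r σ
  lt_of_pred (i j : Fin k) : mkt.Pred (ρ i) (ρ j) → i < j

namespace StableMatching

variable {c : mkt.StableMatching}

/-- The rotations of the sequence `ρ` that are eliminated in `c` are precisely those of index less
than `i`. -/
def EliminatedExactlyBefore (ρ : Fin k → List (W × M)) (i : Fin (k + 1))
    (c : mkt.StableMatching) : Prop :=
  ∀ j, Eliminated (ρ j) c ↔ j.castSucc < i

variable [Finite W]

theorem eliminatedExactlyBefore_zero (hρ : mkt.IsTopologicalSort ρ) (hc : ∀ a, c ≤ a) :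
    EliminatedExactlyBefore ρ 0 c := fun i => by
  obtain ⟨a, b, hab⟩ := inPi_iff_exists_stepBy.1 (hρ.inPi i)
  exact iff_of_false (hab.not_eliminated_of_le (hc a)) (Fin.not_lt_zero _)

theorem EliminatedExactlyBefore.exists_stepBy {i : Fin k}
    (h : EliminatedExactlyBefore ρ i.castSucc c) (hρ : mkt.IsTopologicalSort ρ) :
    ∃ d, StepBy (ρ i) c d := by
  refine exists_stepBy_of_forall_pred_eliminated (hρ.inPi i) (by simp [h i]) fun τ hτ hpred => ?_
  obtain ⟨j, hj, -⟩ := hρ.existsUnique τ hτ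
  obtain ⟨a, b, hab⟩ := inPi_iff_exists_stepBy.1 (hρ.inPi j)
  rw [← hab.eliminated_iff_of_isRotated hj, h j]
  exact Fin.castSucc_lt_castSucc_iff.2 (hρ.lt_of_pred j i ((hab.pred_iff_of_isRotated hj).2 hpred))

theorem EliminatedExactlyBefore.succ {i : Fin k} {d : mkt.StableMatching}
    (h : EliminatedExactlyBefore ρ i.castSucc c) (hρ : mkt.IsTopologicalSort ρ)
    (hd : StepBy (ρ i) c d) : EliminatedExactlyBefore ρ i.succ d := fun j => by
  rw [Fin.castSucc_lt_succ_iff, le_iff_lt_or_eq, ← Fin.castSucc_lt_castSucc_iff, ← h j]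
  constructor
  · intro hj
    by_contra! hne
    have hr := hd.isRotated_of_eliminated (hρ.inPi j) hne.1 hj
    exact hne.2 ((hρ.existsUnique _ (hρ.inPi j)).unique (.refl _) hr)
  · rintro (hj | rfl)
    · exact hj.mono hd.covBy.le
    · exact hd.eliminated

theorem EliminatedExactlyBefore.le (h : EliminatedExactlyBefore ρ (Fin.last k) c)
    (hρ : mkt.IsTopologicalSort ρ) (a : mkt.StableMatching) : a ≤ c := by
  by_contra ha
  obtain ⟨d, hcd, -⟩ := exists_covBy_le_of_lt (left_lt_sup.2 ha)
  obtain ⟨τ, hτ⟩ := exists_stepBy_of_covBy hcd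
  obtain ⟨i, hi, -⟩ := hρ.existsUnique τ (inPi_iff_exists_stepBy.2 ⟨c, d, hτ⟩)
  exact hτ.not_eliminated_of_le le_rfl
    ((hτ.eliminated_iff_of_isRotated hi.symm).2 ((h i).2 (Fin.castSucc_lt_last i)))

end StableMatching

open StableMatching

theorem IsTopologicalSort.exists_chain [Finite W] {c : mkt.StableMatching}
    (hρ : mkt.IsTopologicalSort ρ) (hc : ∀ a, c ≤ a) :
    ∃ chain : Fin (k + 1) → mkt.StableMatching, chain 0 = c ∧
      (∀ i : Fin k, StepBy (ρ i) (chain i.castSucc) (chain i.succ)) ∧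
      ∀ a, a ≤ chain (Fin.last k) := by
  have : Nonempty mkt.StableMatching := ⟨c⟩
  choose! next hnext using fun (i : Fin k) (a : mkt.StableMatching)
    (h : EliminatedExactlyBefore ρ i.castSucc a) => h.exists_stepBy hρ
  let chain : Fin (k + 1) → mkt.StableMatching := Fin.induction c next
  have hchain (i : Fin (k + 1)) : EliminatedExactlyBefore ρ i (chain i) := by
    induction i using Fin.induction with
    | zero => exact eliminatedExactlyBefore_zero hρ hc
    | succ i ih => exact ih.succ hρ (hnext i _ ih)
  exact ⟨chain, rfl, fun i => hnext i _ (hchain i.castSucc), (hchain (Fin.last k)).le hρ⟩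

end Market

theorem topological_sort_gives_maximal_chain_general {M W : Type*} [Finite W]
    (mkt : Market M W) (k : ℕ) (ρ : Fin k → List (W × M))
    (hin : ∀ i : Fin k, mkt.InPi (ρ i))
    (hall : ∀ σ : List (W × M), mkt.InPi σ → ∃! i : Fin k, (ρ i).IsRotated σ)
    (htopl : ∀ i j : Fin k, mkt.Pred (ρ i) (ρ j) → i < j)
    (μman : Matching M W) (hman : mkt.Stable μman)
    (hmanopt : ∀ ν : Matching M W, mkt.Stable ν → mkt.Dom ν μman) :
    ∃ μ : Fin (k + 1) → Matching M W,
      μ 0 = μman ∧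
      (∀ i : Fin k, Matching.IsElimOf (μ i.succ) (μ i.castSucc) (ρ i) ∧
        mkt.Stable (μ i.succ) ∧ mkt.Covers (μ i.succ) (μ i.castSucc)) ∧
      (∀ ν : Matching M W, mkt.Stable ν → mkt.Dom (μ (Fin.last k)) ν) := by
  have hρ : mkt.IsTopologicalSort ρ := ⟨hin, hall, htopl⟩
  have hbot (a : mkt.StableMatching) : ⟨μman, hman⟩ ≤ a := hmanopt a.1 a.2
  obtain ⟨chain, hzero, hstep, htop⟩ := hρ.exists_chain hbot
  refine ⟨fun i => (chain i).1, congrArg Subtype.val hzero, fun i => ?_, fun ν hν => htop ⟨ν, hν⟩⟩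
  exact ⟨(hstep i).isElimOf, (chain i.succ).2,
    Market.StableMatching.covBy_iff_covers.1 (hstep i).covBy⟩

/-- every topological sort of the predecessor graph `G(Π)`
corresponds to a maximal chain: if `ρ_0, …, ρ_{k-1}` enumerates all rotations
of `Π` (each exactly once, up to cyclic shift) so that predecessors come
first, then eliminating them in order starting from the man-optimal stable
matching exposes each `ρ_i` along the way (each step is stable and covers the
previous one) and ends at the woman-optimal stable matching. -/
theorem topological_sort_gives_maximal_chain {M W : Type*} [Fintype M] [Fintype W]
    (mkt : Market M W) (k : ℕ) (ρ : Fin k → List (W × M))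
    (hin : ∀ i : Fin k, mkt.InPi (ρ i))
    (hall : ∀ σ : List (W × M), mkt.InPi σ → ∃! i : Fin k, (ρ i).IsRotated σ)
    (htopl : ∀ i j : Fin k, mkt.Pred (ρ i) (ρ j) → i < j)
    (μman : Matching M W) (hman : mkt.Stable μman)
    (hmanopt : ∀ ν : Matching M W, mkt.Stable ν → mkt.Dom ν μman) :
    ∃ μ : Fin (k + 1) → Matching M W,
      μ 0 = μman ∧
      (∀ i : Fin k, Matching.IsElimOf (μ i.succ) (μ i.castSucc) (ρ i) ∧
        mkt.Stable (μ i.succ) ∧ mkt.Covers (μ i.succ) (μ i.castSucc)) ∧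
      (∀ ν : Matching M W, mkt.Stable ν → mkt.Dom (μ (Fin.last k)) ν) := by
  exact topological_sort_gives_maximal_chain_general mkt k ρ hin hall htopl μman hman hmanopt
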